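/- Let n ≥ 2 and let σ = (σ_0, …, σ_{n+1}) ∈ ℤ^{n+2} be a changemaker vector. Let a > b > c > d be four indices in {0,…,n+1} such that whenever σ_i = σ_j with i ∈ {a,b,c,d} and j ∉ {a,b,c,d}, one has i > j. Let Λ be a linear lattice with vertex basis x_0,…,x_n and diagonal Gram entries a_0,…,a_n all ≥ 2, and suppose φ : σ^⊥ → Λ is an isometry of lattices such that for every v ∈ σ^⊥, the integer ⟨v, e_a + e_b + e_c + e_d⟩ is congruent mod 2 to the coefficient of x_0 in φ(v). Let 𝒯₁ ⊂ ℤ^{n+2} be the set of vectors χ with χ_i ∈ {0,1} for every i ∉ {a,b,c,d} and with (χ_d, χ_c, χ_b, χ_a) equal to one of (±1,0,0,1), (0,±1,0,1), (0,0,±1,1), (0,0,0,2), (0,0,0,0). Assume that σ_a = σ_b + σ_c + σ_d + θ for some θ ∈ {−1,1}, and that for every integer j with 0 ≤ j ≤ 2σ_a + ∑_{i∉{a,b,c,d}} σ_i there exists χ ∈ 𝒯₁ with ⟨χ,σ⟩ = j. Then d = 0. -/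

import Mathlib

/-!
Write `O` for the complement of `{a,b,c,d}` and suppose `d ≠ 0`.

*Linear lattices.* Call `v` irreducible if it is not a sum `x + y` of nonzero elements with
`⟨x,y⟩ ≥ 0`. An irreducible element of a linear lattice is, up to sign, the indicator of a set of
vertices (`exists_indicator`), and if its `x_0`-coordinate is nonzero that set is an initial segment
`{x_0, …, x_k}` (`lower_of_irr`). For nested initial segments `P ⊆ P'` the pairing is at least
`⟨P,P⟩ - 1`, so any two irreducible elements `u, w` with nonzero `x_0`-coordinate satisfy
`|⟨u,w⟩| ≥ min(⟨u,u⟩, ⟨w,w⟩) - 1` (`pairing_lower_bound`). There are also no irreducible elements of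
norm `1` (`irr_norm_ne_one`), which forces every entry of `σ` to be positive.

*The changemaker side.* With `σ > 0`, every `f - e_p ∈ σ^⊥` with `f` a `0/1`-vector vanishing at
`p` is irreducible (`irr_sub_single`). Every nonzero pattern allowed on `{a,b,c,d}` contributes at
least `σ_a - σ_b = σ_c + σ_d + θ`, so every smaller `j ≥ 0` is the sum of `σ` over a subset of `O`
(`exists_outside`). Hence there are subsets `A, B, F ⊆ O` of weights `σ_d`, `σ_c`, `σ_d + θ`, and
the vectors `A - e_d`, `B - e_c`, `F + e_b + e_c - e_a` are irreducible and have odd, hence nonzero,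
`x_0`-coordinate. Applying the bound to the three pairs gives `A ⊆ F`, then `B ∩ F = ∅` with
`|B| = 1`, then `A ∩ B ≠ ∅`, a contradiction. In the remaining case `σ_d = 1`, `θ = -1`, take
`A = {0}` and `F = ∅`; the first pair alone is contradictory.
-/


/-- `σ ∈ ℤᴺ` is a changemaker vector: its entries are nonnegative and nondecreasing,
and every integer `0 ≤ k ≤ ∑ σᵢ` is a sum of a subset of the entries. -/
def IsChangemaker {N : ℕ} (σ : Fin N → ℤ) : Prop :=
  (∀ i, 0 ≤ σ i) ∧ (∀ i j : Fin N, i ≤ j → σ i ≤ σ j) ∧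
  (∀ k : ℤ, 0 ≤ k → k ≤ ∑ i, σ i → ∃ S : Finset (Fin N), k = ∑ i ∈ S, σ i)

/-- The orthogonal complement `σ^⊥ = {v ∈ ℤᴺ : ⟨v,σ⟩ = 0}` as an additive subgroup. -/
def sigmaPerp {N : ℕ} (σ : Fin N → ℤ) : AddSubgroup (Fin N → ℤ) where
  carrier := {v | ∑ i, v i * σ i = 0}
  add_mem' := by
    intro a b ha hb
    simp only [Set.mem_setOf_eq] at *
    simp [add_mul, Finset.sum_add_distrib, ha, hb]
  zero_mem' := by simp
  neg_mem' := by
    intro a ha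
    simp only [Set.mem_setOf_eq] at *
    simp [ha]
  
/-- The pairing of the linear lattice with vertex basis `x_0, …, x_{m-1}` and diagonal
Gram entries `aG`, in vertex-basis coordinates: `⟨xᵢ,xᵢ⟩ = aG i`, `⟨xᵢ,xⱼ⟩ = −1` if
`|i−j| = 1`, and `0` otherwise. -/
def linPair {m : ℕ} (aG : Fin m → ℤ) (x y : Fin m → ℤ) : ℤ :=
  ∑ i, ∑ j, x i * y j *
    (if i = j then aG i
     else if (i : ℕ) + 1 = (j : ℕ) ∨ (j : ℕ) + 1 = (i : ℕ) then -1 else 0)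

/-- Membership in the set `𝒯₁` of odd test vectors determined by the four indices
`a > b > c > d`: entries outside `{a,b,c,d}` lie in `{0,1}` and
`(χ_d, χ_c, χ_b, χ_a)` is one of `(±1,0,0,1)`, `(0,±1,0,1)`, `(0,0,±1,1)`,
`(0,0,0,2)`, `(0,0,0,0)`. -/
def memT1 {n : ℕ} (a b c d : Fin (n + 2)) (χ : Fin (n + 2) → ℤ) : Prop :=
  (∀ i, i ≠ a → i ≠ b → i ≠ c → i ≠ d → (χ i = 0 ∨ χ i = 1)) ∧
  (((χ d = 1 ∨ χ d = -1) ∧ χ c = 0 ∧ χ b = 0 ∧ χ a = 1) ∨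
   (χ d = 0 ∧ (χ c = 1 ∨ χ c = -1) ∧ χ b = 0 ∧ χ a = 1) ∨
   (χ d = 0 ∧ χ c = 0 ∧ (χ b = 1 ∨ χ b = -1) ∧ χ a = 1) ∨
   (χ d = 0 ∧ χ c = 0 ∧ χ b = 0 ∧ χ a = 2) ∨
   (χ d = 0 ∧ χ c = 0 ∧ χ b = 0 ∧ χ a = 0))

/-! ### Linear lattices -/

/-- The Gram matrix entry `⟨xᵢ,xⱼ⟩` of the linear lattice. -/
def gramEntry {m : ℕ} (aG : Fin m → ℤ) (i j : Fin m) : ℤ :=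
  if i = j then aG i
  else if (i : ℕ) + 1 = (j : ℕ) ∨ (j : ℕ) + 1 = (i : ℕ) then -1 else 0

/-- The indicator vector of a set of vertices. -/
def indVec {m : ℕ} (P : Finset (Fin m)) : Fin m → ℤ := fun i => if i ∈ P then 1 else 0

/-- The pairing of the vertex `xⱼ` with the sum of the vertices in `P`. -/
def colSum {m : ℕ} (aG : Fin m → ℤ) (P : Finset (Fin m)) (j : Fin m) : ℤ :=
  ∑ i ∈ P, gramEntry aG i j

/-- `c` is irreducible: it is not a sum of two nonzero elements with nonnegative pairing. -/
def LinIrr {m : ℕ} (aG : Fin m → ℤ) (c : Fin m → ℤ) : Prop :=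
  ∀ x y : Fin m → ℤ, x + y = c → 0 ≤ linPair aG x y → x = 0 ∨ y = 0

lemma linPair_neg_left {m : ℕ} (aG x y : Fin m → ℤ) :
    linPair aG (-x) y = - linPair aG x y := by
  simp only [linPair, Pi.neg_apply, neg_mul, Finset.sum_neg_distrib]

lemma linPair_neg_right {m : ℕ} (aG x y : Fin m → ℤ) :
    linPair aG x (-y) = - linPair aG x y := by
  simp only [linPair, Pi.neg_apply, mul_neg, neg_mul, Finset.sum_neg_distrib]

lemma linPair_comm {m : ℕ} (aG x y : Fin m → ℤ) : linPair aG x y = linPair aG y x := by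
  unfold linPair
  rw [Finset.sum_comm]
  refine Finset.sum_congr rfl fun i _ => Finset.sum_congr rfl fun j _ => ?_
  rcases eq_or_ne i j with rfl | h
  · simp [mul_comm]
  · simp only [h, h.symm, if_false, or_comm, mul_comm (x j)]

lemma linPair_indVec_left {m : ℕ} (aG : Fin m → ℤ) (P : Finset (Fin m)) (y : Fin m → ℤ) :
    linPair aG (indVec P) y = ∑ j, y j * colSum aG P j := by
  unfold linPair
  rw [Finset.sum_comm]
  refine Finset.sum_congr rfl fun j _ => ?_
  trans ∑ i, if i ∈ P then y j * gramEntry aG i j else 0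
  · refine Finset.sum_congr rfl fun i _ => ?_
    by_cases h : i ∈ P <;> simp [indVec, gramEntry, h]
  · rw [Finset.sum_ite_mem, Finset.univ_inter, colSum, Finset.mul_sum]

lemma linPair_indVec {m : ℕ} (aG : Fin m → ℤ) (P P' : Finset (Fin m)) :
    linPair aG (indVec P) (indVec P') = ∑ j ∈ P', colSum aG P j := by
  rw [linPair_indVec_left]
  simp [indVec, Finset.sum_ite_mem]

lemma colSum_eq {m : ℕ} (aG : Fin m → ℤ) (P : Finset (Fin m)) (j : Fin m) :
    colSum aG P j = (if j ∈ P then aG j else 0)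
      - (if ∃ i ∈ P, (i : ℕ) + 1 = j then 1 else 0)
      - (if ∃ i ∈ P, (j : ℕ) + 1 = i then 1 else 0) := by
  have h1 : ∀ i, gramEntry aG i j = (if i = j then aG j else 0)
      - (if (i : ℕ) + 1 = j then 1 else 0) - (if (j : ℕ) + 1 = i then 1 else 0) := by
    intro i
    unfold gramEntry
    rcases eq_or_ne i j with rfl | h
    · simp
    · split_ifs <;> omega
  have key : ∀ p : Fin m → Prop, [DecidablePred p] → (∀ i i', p i → p i' → i = i') →
      (∑ i ∈ P, if p i then (1 : ℤ) else 0) = if ∃ i ∈ P, p i then 1 else 0 := by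
    intro p _ hp
    split_ifs with h
    · obtain ⟨i, hi, hpi⟩ := h
      rw [Finset.sum_eq_single_of_mem i hi, if_pos hpi]
      intro i' _ hne
      exact if_neg fun h' => hne (hp _ _ h' hpi)
    · push Not at h
      exact Finset.sum_eq_zero fun i hi => if_neg (h i hi)
  unfold colSum
  simp only [h1, Finset.sum_sub_distrib]
  rw [key (fun i => (i : ℕ) + 1 = j) (fun i i' h h' => Fin.ext (by omega)),
    key (fun i => (j : ℕ) + 1 = i) (fun i i' h h' => Fin.ext (by omega))]
  simp

lemma colSum_nonneg {m : ℕ} {aG : Fin m → ℤ} (haG : ∀ i, 2 ≤ aG i) {P : Finset (Fin m)}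
    {j : Fin m} (hj : j ∈ P) : 0 ≤ colSum aG P j := by
  have := haG j
  rw [colSum_eq, if_pos hj]
  split_ifs <;> omega

lemma colSum_nonpos {m : ℕ} {aG : Fin m → ℤ} {P : Finset (Fin m)}
    {j : Fin m} (hj : j ∉ P) : colSum aG P j ≤ 0 := by
  rw [colSum_eq, if_neg hj]
  split_ifs <;> omega

lemma LinIrr.neg {m : ℕ} {aG c : Fin m → ℤ} (h : LinIrr aG c) : LinIrr aG (-c) := by
  intro x y hxy hp
  have := h (-x) (-y) (by rw [← neg_add, hxy, neg_neg])
    (by rwa [linPair_neg_left, linPair_neg_right, neg_neg])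
  simpa using this

/-- If `c` is irreducible with some positive coordinate, then splitting off the indicator of
`P = {c > 0}` leaves a vector pairing nonnegatively with it, so `c` equals that indicator. -/
lemma eq_indVec_of_pos {m : ℕ} {aG : Fin m → ℤ} (haG : ∀ i, 2 ≤ aG i) {c : Fin m → ℤ}
    (h : LinIrr aG c) {i : Fin m} (hi : 0 < c i) :
    ∃ P : Finset (Fin m), i ∈ P ∧ c = indVec P := by
  set P : Finset (Fin m) := Finset.univ.filter (fun j => 0 < c j) with hP
  have hiP : i ∈ P := by simp [hP, hi]
  refine ⟨P, hiP, ?_⟩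
  have := h (indVec P) (c - indVec P) (by abel) (by
    rw [linPair_indVec_left]
    refine Finset.sum_nonneg fun j _ => ?_
    by_cases hj : j ∈ P
    · have h1 : 0 < c j := by simpa [hP] using hj
      refine mul_nonneg ?_ (colSum_nonneg haG hj)
      simp only [Pi.sub_apply, indVec, if_pos hj]
      omega
    · have h1 : c j ≤ 0 := by simpa [hP] using hj
      refine mul_nonneg_of_nonpos_of_nonpos ?_ (colSum_nonpos hj)
      simpa only [Pi.sub_apply, indVec, if_neg hj, sub_zero] using h1)
  rcases this with h0 | h0
  · have := congrFun h0 i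
    simp [indVec, hiP] at this
  · exact sub_eq_zero.mp h0

lemma exists_indicator {m : ℕ} {aG : Fin m → ℤ} (haG : ∀ i, 2 ≤ aG i) {c : Fin m → ℤ}
    (h : LinIrr aG c) {i : Fin m} (hi : c i ≠ 0) :
    ∃ P : Finset (Fin m), i ∈ P ∧ (c = indVec P ∨ c = -indVec P) := by
  rcases lt_or_gt_of_ne hi with h' | h'
  · obtain ⟨P, hiP, hP⟩ := eq_indVec_of_pos haG h.neg (i := i) (by simpa using h')
    exact ⟨P, hiP, Or.inr (by rw [← hP, neg_neg])⟩
  · obtain ⟨P, hiP, hP⟩ := eq_indVec_of_pos haG h h'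
    exact ⟨P, hiP, Or.inl hP⟩

/-- Each of the two extreme vertices of `P` (possibly equal) contributes to the norm. -/
lemma two_le_norm_indVec {m : ℕ} {aG : Fin m → ℤ} (haG : ∀ i, 2 ≤ aG i) {P : Finset (Fin m)}
    (hP : P.Nonempty) : 2 ≤ linPair aG (indVec P) (indVec P) := by
  rw [linPair_indVec]
  have hsum : ∑ j ∈ P, ((if P.min' hP = j then (1 : ℤ) else 0)
      + (if P.max' hP = j then 1 else 0)) = 2 := by
    rw [Finset.sum_add_distrib, Finset.sum_ite_eq, Finset.sum_ite_eq,
      if_pos (P.min'_mem hP), if_pos (P.max'_mem hP)]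
    norm_num
  rw [← hsum]
  refine Finset.sum_le_sum fun j hj => ?_
  have ha := haG j
  have h1 : P.min' hP = j → ¬ ∃ i ∈ P, (i : ℕ) + 1 = j := by
    rintro h ⟨i, hi, hij⟩
    have := P.min'_le i hi
    rw [h, Fin.le_def] at this
    omega
  have h2 : P.max' hP = j → ¬ ∃ i ∈ P, (j : ℕ) + 1 = i := by
    rintro h ⟨i, hi, hij⟩
    have := P.le_max' i hi
    rw [h, Fin.le_def] at this
    omega
  rw [colSum_eq, if_pos hj]
  split_ifs <;>
    first | omega | exact absurd ‹_› (h1 ‹_›) | exact absurd ‹_› (h2 ‹_›)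

lemma irr_norm_ne_one {m : ℕ} {aG : Fin m → ℤ} (haG : ∀ i, 2 ≤ aG i) {c : Fin m → ℤ}
    (h : LinIrr aG c) : linPair aG c c ≠ 1 := by
  by_cases hc : c = 0
  · subst hc
    simp [linPair]
  · obtain ⟨i, hi⟩ := Function.ne_iff.mp hc
    obtain ⟨P, hiP, hP⟩ := exists_indicator haG h hi
    have := two_le_norm_indVec haG ⟨i, hiP⟩
    rcases hP with rfl | rfl
    · omega
    · rw [linPair_neg_left, linPair_neg_right]
      omega

/-- The support of an irreducible indicator vector has no gaps: cutting at a gap would split it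
into two orthogonal pieces. -/
lemma lower_of_irr {m : ℕ} {aG : Fin (m + 1) → ℤ} {P : Finset (Fin (m + 1))}
    (h : LinIrr aG (indVec P)) (h0 : 0 ∈ P) {i j : Fin (m + 1)} (hij : i ≤ j) (hj : j ∈ P) :
    i ∈ P := by
  by_contra hi
  have := h (indVec (P.filter (· < i))) (indVec (P.filter (fun k => ¬ k < i)))
    (by
      ext k
      simp only [Pi.add_apply, indVec, Finset.mem_filter]
      split_ifs <;> first | omega | tauto)
    (by
      rw [linPair_indVec]
      refine Finset.sum_nonneg fun k hk => Finset.sum_nonneg fun l hl => ?_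
      rw [Finset.mem_filter] at hk hl
      have hki : k ≠ i := fun e => hi (e ▸ hk.1)
      have hki' : (k : ℕ) ≠ i := fun e => hki (Fin.ext e)
      have h1 := hk.2
      have h2 := hl.2
      rw [Fin.lt_def] at h1 h2
      unfold gramEntry
      rw [if_neg (by rintro rfl; omega), if_neg (by omega)])
  rcases this with h' | h'
  · have h1 := congrFun h' 0
    have h2 : (0 : Fin (m + 1)) < i := Fin.pos_iff_ne_zero.mpr (by rintro rfl; exact hi h0)
    simp [indVec, h0, h2] at h1
  · have h1 := congrFun h' j
    simp [indVec, hj, hij] at h1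

/-- For lower sets `P ⊆ P'`, at most one vertex of `P' \ P` is adjacent to `P`. -/
lemma nested_pairing {m : ℕ} {aG : Fin m → ℤ} {P P' : Finset (Fin m)}
    (hne : P.Nonempty) (hP : ∀ i j : Fin m, i ≤ j → j ∈ P → i ∈ P) (hsub : P ⊆ P') :
    linPair aG (indVec P) (indVec P) - 1 ≤ linPair aG (indVec P) (indVec P') := by
  rw [linPair_indVec, linPair_indVec, ← Finset.sum_sdiff hsub]
  have hcol : ∀ j ∈ P' \ P,
      -(if ((P.max' hne : Fin m) : ℕ) + 1 = j then (1 : ℤ) else 0) ≤ colSum aG P j := by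
    intro j hj
    have hjP := (Finset.mem_sdiff.mp hj).2
    have h1 : ¬ ∃ i ∈ P, (j : ℕ) + 1 = i := by
      rintro ⟨i, hi, hji⟩
      exact hjP (hP j i (by rw [Fin.le_def]; omega) hi)
    have h2 : (∃ i ∈ P, (i : ℕ) + 1 = j) → ((P.max' hne : Fin m) : ℕ) + 1 = j := by
      rintro ⟨i, hi, hij⟩
      have h3 := P.le_max' i hi
      have h4 : ¬ j ≤ P.max' hne := fun h => hjP (hP _ _ h (P.max'_mem hne))
      rw [Fin.le_def] at h3 h4
      omega
    rw [colSum_eq, if_neg hjP, if_neg h1]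
    split_ifs <;> first | omega | exact absurd (h2 ‹_›) ‹_›
  have hone : ∑ j ∈ P' \ P, (if ((P.max' hne : Fin m) : ℕ) + 1 = j then (1 : ℤ) else 0) ≤ 1 := by
    rw [← Finset.sum_filter, Finset.sum_const, nsmul_eq_mul, mul_one]
    have : ((P' \ P).filter (fun j : Fin m => ((P.max' hne : Fin m) : ℕ) + 1 = j)).card ≤ 1 := by
      refine Finset.card_le_one.mpr fun x hx y hy => Fin.ext ?_
      rw [Finset.mem_filter] at hx hy
      omega
    exact_mod_cast this
  have := Finset.sum_le_sum hcol
  rw [Finset.sum_neg_distrib] at this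
  omega

lemma pairing_lower_bound {m : ℕ} {aG : Fin (m + 1) → ℤ} (haG : ∀ i, 2 ≤ aG i)
    {c c' : Fin (m + 1) → ℤ} (h : LinIrr aG c) (h' : LinIrr aG c') (h0 : c 0 ≠ 0)
    (h0' : c' 0 ≠ 0) :
    min (linPair aG c c) (linPair aG c' c') - 1 ≤ |linPair aG c c'| := by
  obtain ⟨P, hP0, hP⟩ := exists_indicator haG h h0
  obtain ⟨P', hP0', hP'⟩ := exists_indicator haG h' h0'
  have hirr : LinIrr aG (indVec P) := by
    rcases hP with rfl | rfl
    · exact h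
    · simpa using h.neg
  have hirr' : LinIrr aG (indVec P') := by
    rcases hP' with rfl | rfl
    · exact h'
    · simpa using h'.neg
  have hlow : ∀ i j, i ≤ j → j ∈ P → i ∈ P := fun i j => lower_of_irr hirr hP0
  have hlow' : ∀ i j, i ≤ j → j ∈ P' → i ∈ P' := fun i j => lower_of_irr hirr' hP0'
  have hnest : P ⊆ P' ∨ P' ⊆ P := by
    by_contra! hcon
    obtain ⟨⟨i, hi, hi'⟩, ⟨j, hj, hj'⟩⟩ :=
      And.intro (Finset.not_subset.mp hcon.1) (Finset.not_subset.mp hcon.2)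
    rcases le_total i j with hij | hij
    · exact hi' (hlow' i j hij hj)
    · exact hj' (hlow j i hij hi)
  have hmain : min (linPair aG (indVec P) (indVec P)) (linPair aG (indVec P') (indVec P')) - 1
      ≤ |linPair aG (indVec P) (indVec P')| := by
    rcases hnest with hs | hs
    · have h1 := nested_pairing (aG := aG) ⟨0, hP0⟩ hlow hs
      have h2 := le_abs_self (linPair aG (indVec P) (indVec P'))
      omega
    · have h1 := nested_pairing (aG := aG) ⟨0, hP0'⟩ hlow' hs
      rw [linPair_comm aG (indVec P') (indVec P)] at h1
      have h2 := le_abs_self (linPair aG (indVec P) (indVec P'))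
      omega
  rcases hP with rfl | rfl <;> rcases hP' with rfl | rfl <;>
    simpa only [linPair_neg_left, linPair_neg_right, neg_neg, abs_neg] using hmain

/-! ### Irreducible elements of `σ^⊥` -/

/-- Irreducibility in `σ^⊥`, with the ambient inner product. -/
def PerpIrr {N : ℕ} (σ : Fin N → ℤ) (v : sigmaPerp σ) : Prop :=
  ∀ x y : sigmaPerp σ, x + y = v →
    0 ≤ ∑ i, (x : Fin N → ℤ) i * (y : Fin N → ℤ) i → x = 0 ∨ y = 0

/-- For a vector with entries in `{-1,0,1}`, a decomposition `x + y` with `⟨x,y⟩ ≥ 0` has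
`x` and `y` of disjoint supports, so irreducibility only has to be tested on restrictions of `v`
to subsets of its support. -/
lemma perpIrr_of_sub {N : ℕ} {σ : Fin N → ℤ} (v : sigmaPerp σ)
    (hv : ∀ i, (v : Fin N → ℤ) i = -1 ∨ (v : Fin N → ℤ) i = 0 ∨ (v : Fin N → ℤ) i = 1)
    (hsub : ∀ x : sigmaPerp σ,
      (∀ i, (x : Fin N → ℤ) i = 0 ∨ (x : Fin N → ℤ) i = (v : Fin N → ℤ) i) → x = 0 ∨ x = v) :
    PerpIrr σ v := by
  intro x y hxy hp
  have hc : ∀ i, (x : Fin N → ℤ) i + (y : Fin N → ℤ) i = (v : Fin N → ℤ) i := by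
    intro i
    rw [← hxy]
    rfl
  have hle : ∀ i ∈ Finset.univ, (x : Fin N → ℤ) i * (y : Fin N → ℤ) i ≤ 0 := by
    intro i _
    have h1 := hc i
    have h2 := hv i
    generalize (x : Fin N → ℤ) i = s at *
    generalize (y : Fin N → ℤ) i = t at *
    rcases le_or_gt s 0 with hs | hs
    · rcases eq_or_lt_of_le hs with rfl | hs
      · simp
      · exact mul_nonpos_of_nonpos_of_nonneg hs.le (by omega)
    · exact mul_nonpos_of_nonneg_of_nonpos hs.le (by omega)
  have hz := (Finset.sum_eq_zero_iff_of_nonpos hle).mp (le_antisymm (Finset.sum_nonpos hle) hp)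
  rcases hsub x (fun i => by
    have h1 := hc i
    rcases mul_eq_zero.mp (hz i (Finset.mem_univ i)) with h | h
    · exact Or.inl h
    · right
      omega) with h | h
  · exact Or.inl h
  · right
    rw [h] at hxy
    simpa using hxy

lemma eq_zero_of_nonneg {N : ℕ} {σ : Fin N → ℤ} (hpos : ∀ i, 0 < σ i) (x : sigmaPerp σ)
    (hx : ∀ i, 0 ≤ (x : Fin N → ℤ) i) : x = 0 := by
  have h : ∑ i, (x : Fin N → ℤ) i * σ i = 0 := x.2
  rw [Finset.sum_eq_zero_iff_of_nonneg (fun i _ => mul_nonneg (hx i) (hpos i).le)] at h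
  ext i
  have := (mul_eq_zero.mp (h i (Finset.mem_univ i))).resolve_right (hpos i).ne'
  simpa using this

lemma irr_sub_single {N : ℕ} {σ : Fin N → ℤ} (hpos : ∀ i, 0 < σ i) (v : sigmaPerp σ)
    (p : Fin N) (hp : (v : Fin N → ℤ) p = -1)
    (hv : ∀ i, i ≠ p → (v : Fin N → ℤ) i = 0 ∨ (v : Fin N → ℤ) i = 1) : PerpIrr σ v := by
  refine perpIrr_of_sub v (fun i => ?_) (fun x hx => ?_)
  · by_cases h : i = p
    · exact Or.inl (h ▸ hp)
    · exact Or.inr (hv i h)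
  · -- whichever of `x`, `v - x` avoids the negative entry at `p` is nonnegative, hence zero
    rcases hx p with h | h
    · left
      refine eq_zero_of_nonneg hpos x fun i => ?_
      by_cases hi : i = p
      · rw [hi, h]
      · have h1 := hv i hi
        have h2 := hx i
        omega
    · right
      have := eq_zero_of_nonneg hpos (v - x) fun i => by
        have h3 : ((v - x : sigmaPerp σ) : Fin N → ℤ) i
          = (v : Fin N → ℤ) i - (x : Fin N → ℤ) i := rfl
        rw [h3]
        by_cases hi : i = p
        · rw [hi, h, sub_self]
        · have h1 := hv i hi
          have h2 := hx i
          omega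
      exact (sub_eq_zero.mp this).symm

/-- Every `0 ≤ j < σ_a - σ_b` is attained by a `0/1`-vector supported off `{a,b,c,d}`, since any
nonzero pattern on `{a,b,c,d}` contributes at least `σ_a - σ_b`. -/
lemma exists_outside {n : ℕ} {σ : Fin (n + 2) → ℤ} (hpos : ∀ i, 0 < σ i)
    {a b c d : Fin (n + 2)} (hdc : d < c) (hcb : c < b) (hba : b < a)
    (hmono : ∀ i j : Fin (n + 2), i ≤ j → σ i ≤ σ j)
    (hT : ∀ j : ℤ, 0 ≤ j →
      j ≤ 2 * σ a + ∑ i ∈ Finset.univ.filter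
        (fun i => i ≠ a ∧ i ≠ b ∧ i ≠ c ∧ i ≠ d), σ i →
      ∃ χ : Fin (n + 2) → ℤ, memT1 a b c d χ ∧ (∑ i, χ i * σ i) = j)
    (j : ℤ) (hj0 : 0 ≤ j) (hj : j < σ a - σ b) :
    ∃ χ : Fin (n + 2) → ℤ, (∀ i, χ i = 0 ∨ χ i = 1) ∧ χ a = 0 ∧ χ b = 0 ∧ χ c = 0 ∧ χ d = 0 ∧
      ∑ i, χ i * σ i = j := by
  have hOnn : 0 ≤ ∑ i ∈ Finset.univ.filter
      (fun i => i ≠ a ∧ i ≠ b ∧ i ≠ c ∧ i ≠ d), σ i := Finset.sum_nonneg fun i _ => (hpos i).le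
  have ha := hpos a
  have hb := hpos b
  have hc := hpos c
  have hd := hpos d
  have hcb' := hmono c b hcb.le
  have hdb' := hmono d b (hdc.trans hcb).le
  obtain ⟨χ, ⟨hO, hI⟩, hs⟩ := hT j hj0 (by omega)
  have hac : a ≠ c := (hcb.trans hba).ne'
  have had : a ≠ d := (hdc.trans (hcb.trans hba)).ne'
  have hbd : b ≠ d := (hdc.trans hcb).ne'
  have hlow : χ a * σ a + χ b * σ b + χ c * σ c + χ d * σ d ≤ j := by
    have h1 : ∑ i, (χ i - (if i = a then χ a else 0) - (if i = b then χ b else 0)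
        - (if i = c then χ c else 0) - (if i = d then χ d else 0)) * σ i
        = j - (χ a * σ a + χ b * σ b + χ c * σ c + χ d * σ d) := by
      simp only [sub_mul, Finset.sum_sub_distrib, hs, ite_mul, zero_mul, Finset.sum_ite_eq',
        Finset.mem_univ, if_true]
      ring
    have h2 : 0 ≤ ∑ i, (χ i - (if i = a then χ a else 0) - (if i = b then χ b else 0)
        - (if i = c then χ c else 0) - (if i = d then χ d else 0)) * σ i := by
      refine Finset.sum_nonneg fun i _ => mul_nonneg ?_ (hpos i).le
      by_cases hia : i = a
      · subst hia; simp [hba.ne', hac, had]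
      by_cases hib : i = b
      · subst hib; simp [hba.ne, hcb.ne', hbd]
      by_cases hic : i = c
      · subst hic; simp [hac.symm, hcb.ne, hdc.ne']
      by_cases hid : i = d
      · subst hid; simp [had.symm, hbd.symm, hdc.ne]
      have := hO i hia hib hic hid
      simp only [hia, hib, hic, hid, if_false]
      omega
    omega
  have hzero : χ d = 0 ∧ χ c = 0 ∧ χ b = 0 ∧ χ a = 0 := by
    rcases hI with ⟨h1 | h1, h2, h3, h4⟩ | ⟨h1, h2 | h2, h3, h4⟩ | ⟨h1, h2, h3 | h3, h4⟩ |
      ⟨h1, h2, h3, h4⟩ | h <;>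
    first
    | exact h
    | (exfalso; rw [h1, h2, h3, h4] at hlow; linarith)
  obtain ⟨h1, h2, h3, h4⟩ := hzero
  refine ⟨χ, fun i => ?_, h4, h3, h2, h1, hs⟩
  by_cases hia : i = a
  · exact Or.inl (hia ▸ h4)
  by_cases hib : i = b
  · exact Or.inl (hib ▸ h3)
  by_cases hic : i = c
  · exact Or.inl (hic ▸ h2)
  by_cases hid : i = d
  · exact Or.inl (hid ▸ h1)
  exact hO i hia hib hic hid

lemma sum_pos_of_dot_pos {N : ℕ} {σ χ : Fin N → ℤ} (hχ : ∀ i, χ i = 0 ∨ χ i = 1)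
    (h : 0 < ∑ i, χ i * σ i) : 1 ≤ ∑ i, χ i := by
  have hnn : ∀ i ∈ Finset.univ, 0 ≤ χ i := fun i _ => by have := hχ i; omega
  by_contra! hlt
  have h0 : ∑ i, χ i = 0 := le_antisymm (by omega) (Finset.sum_nonneg hnn)
  rw [Finset.sum_eq_zero_iff_of_nonneg hnn] at h0
  simp [fun i => h0 i (Finset.mem_univ i)] at h

/-! ### The three test vectors -/

/-- under the strengthened changemaker condition, `d = 0`. -/
theorem smallest_index_is_zero (n : ℕ) (hn : 2 ≤ n)
    (σ : Fin (n + 2) → ℤ) (hσ : IsChangemaker σ)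
    (a b c d : Fin (n + 2)) (hdc : d < c) (hcb : c < b) (hba : b < a)
    (hmax : ∀ i j : Fin (n + 2), (i = a ∨ i = b ∨ i = c ∨ i = d) →
      ¬(j = a ∨ j = b ∨ j = c ∨ j = d) → σ i = σ j → j < i)
    (aG : Fin (n + 1) → ℤ) (haG : ∀ i, 2 ≤ aG i)
    (e : sigmaPerp σ ≃+ (Fin (n + 1) → ℤ))
    (hiso : ∀ v w : sigmaPerp σ,
      (∑ i, (v : Fin (n + 2) → ℤ) i * (w : Fin (n + 2) → ℤ) i)
        = linPair aG (e v) (e w))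
    (hx0 : ∀ v : sigmaPerp σ,
      Int.ModEq 2
        ((v : Fin (n + 2) → ℤ) a + (v : Fin (n + 2) → ℤ) b
          + (v : Fin (n + 2) → ℤ) c + (v : Fin (n + 2) → ℤ) d)
        (e v 0))
    (θ : ℤ) (hθ : θ = 1 ∨ θ = -1)
    (hσa : σ a = σ b + σ c + σ d + θ)
    (hT : ∀ j : ℤ, 0 ≤ j →
      j ≤ 2 * σ a + ∑ i ∈ Finset.univ.filter
        (fun i => i ≠ a ∧ i ≠ b ∧ i ≠ c ∧ i ≠ d), σ i →
      ∃ χ : Fin (n + 2) → ℤ, memT1 a b c d χ ∧ (∑ i, χ i * σ i) = j) :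
    d = 0 := by
  have hmono := hσ.2.1
  have hirr : ∀ v : sigmaPerp σ, PerpIrr σ v → LinIrr aG (e v) := by
    intro v hv x y hxy hp
    have := hv (e.symm x) (e.symm y) (by rw [← map_add, hxy, e.symm_apply_apply])
      (by rw [hiso]; simpa using hp)
    simpa using this
  -- an entry `σ i = 0` would put the irreducible norm-one vector `e_i` into `σ^⊥`
  have hpos : ∀ i, 0 < σ i := by
    intro i
    refine lt_of_le_of_ne (hσ.1 i) fun h0 => ?_
    let v : sigmaPerp σ := ⟨Pi.single i 1, by
      change ∑ k, (Pi.single i 1 : Fin (n + 2) → ℤ) k * σ k = 0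
      simp [Pi.single_apply, ← h0]⟩
    have hv : ∀ k, (v : Fin (n + 2) → ℤ) k = if k = i then 1 else 0 := fun k => by
      simp [v, Pi.single_apply]
    have hvirr : PerpIrr σ v := by
      refine perpIrr_of_sub v (fun k => ?_) (fun x hx => ?_)
      · rw [hv k]
        split_ifs <;> simp
      · rcases hx i with h | h
        · left
          ext k
          have h1 := hx k
          rw [hv k] at h1
          by_cases hk : k = i
          · subst hk; simpa using h
          · simpa [hk] using h1
        · right
          ext k
          have h1 := hx k
          rw [hv k] at h1
          by_cases hk : k = i
          · subst hk; exact h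
          · rw [hv k]; simpa [hk] using h1
    refine irr_norm_ne_one haG (hirr v hvirr) ?_
    rw [← hiso]
    simp [hv]
  have hodd : ∀ v : sigmaPerp σ, ((v : Fin (n + 2) → ℤ) a + (v : Fin (n + 2) → ℤ) b
          + (v : Fin (n + 2) → ℤ) c + (v : Fin (n + 2) → ℤ) d) % 2 = 1 → e v 0 ≠ 0 := by
    intro v hv h0
    have := hx0 v
    rw [h0, Int.ModEq, hv] at this
    norm_num at this
  have hbound : ∀ v w : sigmaPerp σ, PerpIrr σ v → PerpIrr σ w →
      ((v : Fin (n + 2) → ℤ) a + (v : Fin (n + 2) → ℤ) b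
          + (v : Fin (n + 2) → ℤ) c + (v : Fin (n + 2) → ℤ) d) % 2 = 1 →
      ((w : Fin (n + 2) → ℤ) a + (w : Fin (n + 2) → ℤ) b
          + (w : Fin (n + 2) → ℤ) c + (w : Fin (n + 2) → ℤ) d) % 2 = 1 →
      min (∑ i, (v : Fin (n + 2) → ℤ) i * (v : Fin (n + 2) → ℤ) i)
        (∑ i, (w : Fin (n + 2) → ℤ) i * (w : Fin (n + 2) → ℤ) i) - 1
        ≤ |∑ i, (v : Fin (n + 2) → ℤ) i * (w : Fin (n + 2) → ℤ) i| := by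
    intro v w hv hw hv' hw'
    rw [hiso, hiso, hiso]
    exact pairing_lower_bound haG (hirr v hv) (hirr w hw) (hodd v hv') (hodd w hw')
  by_contra hd0
  have hab : a ≠ b := hba.ne'
  have hbc : b ≠ c := hcb.ne'
  have hcd : c ≠ d := hdc.ne'
  have hac : a ≠ c := (hcb.trans hba).ne'
  have had : a ≠ d := (hdc.trans (hcb.trans hba)).ne'
  have hbd : b ≠ d := (hdc.trans hcb).ne'
  have hdpos := hpos d
  have hcpos := hpos c
  have hdc' := hmono d c hdc.le
  have hout := exists_outside hpos hdc hcb hba hmono hT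
  -- the vector `α - e_p` for a `0/1`-vector `α` off `{a,b,c,d}` of weight `σ_p`, `p ∈ {c, d}`
  have hsmall : ∀ p, (p = c ∨ p = d) → ∀ α : Fin (n + 2) → ℤ, (∀ i, α i = 0 ∨ α i = 1) →
      α a = 0 → α b = 0 → α c = 0 → α d = 0 → ∑ i, α i * σ i = σ p →
      ∃ v : sigmaPerp σ, (∀ i, (v : Fin (n + 2) → ℤ) i = α i - if i = p then 1 else 0) ∧
        PerpIrr σ v ∧ ((v : Fin (n + 2) → ℤ) a + (v : Fin (n + 2) → ℤ) b
          + (v : Fin (n + 2) → ℤ) c + (v : Fin (n + 2) → ℤ) d) % 2 = 1 := by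
    intro p hp α hα h1 h2 h3 h4 hs
    let v : sigmaPerp σ := ⟨fun i => α i - if i = p then 1 else 0, by
      change ∑ k, (α k - if k = p then 1 else 0) * σ k = 0
      simp [sub_mul, Finset.sum_sub_distrib, hs]⟩
    have hv : ∀ i, (v : Fin (n + 2) → ℤ) i = α i - if i = p then 1 else 0 := fun i => rfl
    refine ⟨v, hv, irr_sub_single hpos v p ?_ ?_, ?_⟩
    · rw [hv]
      rcases hp with rfl | rfl <;> simp [*]
    · intro i hi
      rw [hv, if_neg hi, sub_zero]
      exact hα i
    · simp only [hv]
      rcases hp with rfl | rfl <;> simp [*, hcd.symm]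
  -- the vector `φ + e_b + e_c - e_a` for a `0/1`-vector `φ` off `{a,b,c,d}` of weight `σ_d + θ`
  have hbig : ∀ α : Fin (n + 2) → ℤ, (∀ i, α i = 0 ∨ α i = 1) →
      α a = 0 → α b = 0 → α c = 0 → α d = 0 → ∑ i, α i * σ i = σ d + θ →
      ∃ v : sigmaPerp σ, (∀ i, (v : Fin (n + 2) → ℤ) i =
          α i + (if i = b then 1 else 0) + (if i = c then 1 else 0) - if i = a then 1 else 0) ∧
        PerpIrr σ v ∧ ((v : Fin (n + 2) → ℤ) a + (v : Fin (n + 2) → ℤ) b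
          + (v : Fin (n + 2) → ℤ) c + (v : Fin (n + 2) → ℤ) d) % 2 = 1 := by
    intro α hα h1 h2 h3 h4 hs
    let v : sigmaPerp σ := ⟨fun i => α i + (if i = b then 1 else 0) + (if i = c then 1 else 0)
        - if i = a then 1 else 0, by
      change ∑ k, (α k + (if k = b then 1 else 0) + (if k = c then 1 else 0)
        - if k = a then 1 else 0) * σ k = 0
      simp only [sub_mul, add_mul, Finset.sum_sub_distrib, Finset.sum_add_distrib, hs, ite_mul,
        zero_mul, one_mul, Finset.sum_ite_eq', Finset.mem_univ, if_true]
      omega⟩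
    have hv : ∀ i, (v : Fin (n + 2) → ℤ) i = α i + (if i = b then 1 else 0)
        + (if i = c then 1 else 0) - if i = a then 1 else 0 := fun i => rfl
    refine ⟨v, hv, irr_sub_single hpos v a ?_ ?_, ?_⟩
    · rw [hv]
      simp [*]
    · intro i hi
      rw [hv, if_neg hi, sub_zero]
      by_cases hib : i = b
      · subst hib; simp [*]
      by_cases hic : i = c
      · subst hic; simp [*]
      simpa [hib, hic] using hα i
    · simp only [hv]
      simp [*, hab.symm, hbc.symm, hac.symm, had.symm, hbd.symm, hcd.symm]
  have hsq : ∀ α : Fin (n + 2) → ℤ, (∀ i, α i = 0 ∨ α i = 1) → ∀ i, α i * α i = α i := by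
    intro α hα i
    rcases hα i with h | h <;> simp [h]
  have hnormS : ∀ p, ∀ α : Fin (n + 2) → ℤ, (∀ i, α i = 0 ∨ α i = 1) → α p = 0 →
      ∑ i, (α i - if i = p then 1 else 0) * (α i - if i = p then 1 else 0) = ∑ i, α i + 1 := by
    intro p α hα hp
    have : ∀ i, (α i - if i = p then 1 else 0) * (α i - if i = p then 1 else 0)
        = α i + if i = p then 1 else 0 := by
      intro i
      by_cases h : i = p
      · subst h; simp [hp]
      · simp [h, hsq α hα]
    simp [this, Finset.sum_add_distrib]
  have hnormB : ∀ α : Fin (n + 2) → ℤ, (∀ i, α i = 0 ∨ α i = 1) →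
      α a = 0 → α b = 0 → α c = 0 →
      ∑ i, (α i + (if i = b then 1 else 0) + (if i = c then 1 else 0) - if i = a then 1 else 0)
        * (α i + (if i = b then 1 else 0) + (if i = c then 1 else 0) - if i = a then 1 else 0)
        = ∑ i, α i + 3 := by
    intro α hα h1 h2 h3
    have : ∀ i, (α i + (if i = b then 1 else 0) + (if i = c then 1 else 0)
          - if i = a then 1 else 0)
        * (α i + (if i = b then 1 else 0) + (if i = c then 1 else 0) - if i = a then 1 else 0)
        = α i + (if i = a then 1 else 0) + (if i = b then 1 else 0)
          + if i = c then 1 else 0 := by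
      intro i
      by_cases hia : i = a
      · subst hia; simp [*]
      by_cases hib : i = b
      · subst hib; simp [*]
      by_cases hic : i = c
      · subst hic; simp [*]
      simp [hia, hib, hic, hsq α hα]
    simp only [this, Finset.sum_add_distrib, Finset.sum_ite_eq', Finset.mem_univ, if_true]
    ring
  -- `⟨α - e_d, φ + e_b + e_c - e_a⟩` bounds `|A ∩ F|` from below
  have hpair1 : ∀ α φ : Fin (n + 2) → ℤ, (∀ i, α i = 0 ∨ α i = 1) →
      α a = 0 → α b = 0 → α c = 0 → α d = 0 → ∑ i, α i * σ i = σ d →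
      (∀ i, φ i = 0 ∨ φ i = 1) →
      φ a = 0 → φ b = 0 → φ c = 0 → φ d = 0 → ∑ i, φ i * σ i = σ d + θ →
      min (∑ i, α i + 1) (∑ i, φ i + 3) - 1 ≤ |∑ i, α i * φ i| := by
    intro α φ hα a1 a2 a3 a4 as hφ f1 f2 f3 f4 fs
    obtain ⟨u, hu, hui, huo⟩ := hsmall d (Or.inr rfl) α hα a1 a2 a3 a4 as
    obtain ⟨w, hw, hwi, hwo⟩ := hbig φ hφ f1 f2 f3 f4 fs
    have := hbound u w hui hwi huo hwo
    simp only [hu, hw] at this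
    rw [hnormS d α hα a4, hnormB φ hφ f1 f2 f3] at this
    have e1 : ∑ i, (α i - if i = d then 1 else 0) * (φ i + (if i = b then 1 else 0)
        + (if i = c then 1 else 0) - if i = a then 1 else 0) = ∑ i, α i * φ i := by
      refine Finset.sum_congr rfl fun i _ => ?_
      by_cases hia : i = a
      · subst hia; simp [*]
      by_cases hib : i = b
      · subst hib; simp [*]
      by_cases hic : i = c
      · subst hic; simp [*]
      by_cases hid : i = d
      · subst hid; simp [*]
      simp [hia, hib, hic, hid]
    rwa [e1] at this
  have h0mem : ∀ x ∈ [a, b, c, d], x ≠ 0 := by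
    have h0 : (0 : Fin (n + 2)) < d := Fin.pos_iff_ne_zero.mpr hd0
    simp only [List.mem_cons, List.not_mem_nil, or_false, forall_eq_or_imp, forall_eq]
    exact ⟨(h0.trans (hdc.trans (hcb.trans hba))).ne', (h0.trans (hdc.trans hcb)).ne',
      (h0.trans hdc).ne', hd0⟩
  simp only [List.mem_cons, List.not_mem_nil, or_false, forall_eq_or_imp, forall_eq] at h0mem
  obtain ⟨ha0, hb0, hc0, -⟩ := h0mem
  by_cases hcase : θ = -1 ∧ σ d = 1
  · have hσ0 : σ 0 = 1 := by
      have h1 := hmono 0 d (Fin.zero_le d)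
      have h2 := hpos 0
      omega
    have := hpair1 (Pi.single 0 1) 0
      (fun i => by by_cases h : i = 0 <;> simp [h])
      (by simp [ha0]) (by simp [hb0])
      (by simp [hc0]) (by simp [hd0])
      (by simp [Pi.single_apply, hσ0, hcase.2])
      (fun i => Or.inl rfl) rfl rfl rfl rfl (by simp [hcase.1, hcase.2])
    norm_num at this
  · obtain ⟨α, hα, a1, a2, a3, a4, as⟩ := hout (σ d) (by omega) (by omega)
    obtain ⟨β, hβ, b1, b2, b3, b4, bs⟩ := hout (σ c) (by omega) (by omega)
    obtain ⟨φ, hφ, f1, f2, f3, f4, fs⟩ := hout (σ d + θ) (by omega) (by omega)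
    have p1 := hpair1 α φ hα a1 a2 a3 a4 as hφ f1 f2 f3 f4 fs
    obtain ⟨u, hu, hui, huo⟩ := hsmall d (Or.inr rfl) α hα a1 a2 a3 a4 as
    obtain ⟨v, hv, hvi, hvo⟩ := hsmall c (Or.inl rfl) β hβ b1 b2 b3 b4 bs
    obtain ⟨w, hw, hwi, hwo⟩ := hbig φ hφ f1 f2 f3 f4 fs
    have p2 := hbound v w hvi hwi hvo hwo
    simp only [hv, hw] at p2
    rw [hnormS c β hβ b3, hnormB φ hφ f1 f2 f3] at p2
    have e2 : ∑ i, (β i - if i = c then 1 else 0) * (φ i + (if i = b then 1 else 0)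
        + (if i = c then 1 else 0) - if i = a then 1 else 0) = ∑ i, β i * φ i - 1 := by
      have : ∀ i, (β i - if i = c then 1 else 0) * (φ i + (if i = b then 1 else 0)
        + (if i = c then 1 else 0) - if i = a then 1 else 0)
          = β i * φ i - if i = c then 1 else 0 := by
        intro i
        by_cases hia : i = a
        · subst hia; simp [*]
        by_cases hib : i = b
        · subst hib; simp [*]
        by_cases hic : i = c
        · subst hic; simp [*]
        simp [hia, hib, hic]
      simp [this, Finset.sum_sub_distrib]
    rw [e2] at p2
    have p3 := hbound u v hui hvi huo hvo
    simp only [hu, hv] at p3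
    rw [hnormS d α hα a4, hnormS c β hβ b3] at p3
    have e3 : ∑ i, (α i - if i = d then 1 else 0) * (β i - if i = c then 1 else 0)
        = ∑ i, α i * β i := by
      refine Finset.sum_congr rfl fun i _ => ?_
      by_cases hic : i = c
      · subst hic; simp [*]
      by_cases hid : i = d
      · subst hid; simp [*]
      simp [hic, hid]
    rw [e3] at p3
    have hA := sum_pos_of_dot_pos hα (by rw [as]; exact hdpos)
    have hB := sum_pos_of_dot_pos hβ (by rw [bs]; exact hcpos)
    have hF : 0 ≤ ∑ i, φ i := Finset.sum_nonneg fun i _ => by have := hφ i; omega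
    have hprod : ∀ f g : Fin (n + 2) → ℤ, (∀ i, f i = 0 ∨ f i = 1) →
        (∀ i, g i = 0 ∨ g i = 1) → 0 ≤ ∑ i, f i * g i ∧ ∑ i, f i * g i ≤ ∑ i, f i ∧
          ∑ i, f i * g i ≤ ∑ i, g i := by
      intro f g hf hg
      refine ⟨Finset.sum_nonneg fun i _ => ?_, Finset.sum_le_sum fun i _ => ?_,
        Finset.sum_le_sum fun i _ => ?_⟩ <;>
      rcases hf i with h | h <;> rcases hg i with g | g <;> simp [h, g]
    -- `|A ∩ B| ≤ |B ∩ F| + |A \ F|`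
    have hcomb : ∑ i, α i * β i ≤ ∑ i, β i * φ i + (∑ i, α i - ∑ i, α i * φ i) := by
      rw [← Finset.sum_sub_distrib, ← Finset.sum_add_distrib]
      refine Finset.sum_le_sum fun i _ => ?_
      rcases hα i with h | h <;> rcases hβ i with h' | h' <;> rcases hφ i with h'' | h'' <;>
        simp [h, h', h'']
    obtain ⟨q1, q2, q3⟩ := hprod α φ hα hφ
    obtain ⟨r1, r2, r3⟩ := hprod β φ hβ hφ
    obtain ⟨s1, -, -⟩ := hprod α β hα hβ
    rw [abs_of_nonneg q1] at p1
    rw [abs_of_nonneg s1] at p3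
    rcases abs_cases (∑ i, β i * φ i - 1) with ⟨h, -⟩ | ⟨h, -⟩ <;> rw [h] at p2 <;> omega
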